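/- Let (X, ρ) be a metric space and γ : [a,b] → X a continuous mapping such that for every Lipschitz function h : X → ℝ the composition h ∘ γ : [a,b] → ℝ is absolutely continuous. Then γ itself is absolutely continuous. -/

import Mathlib

/-- A mapping `γ` of the segment `[a,b]` into a metric space is absolutely continuous
if for every `ε > 0` there is `δ > 0` such that for every finite collection of pairwise
disjoint intervals `(cᵢ, dᵢ) ⊆ [a,b]` with `∑ (dᵢ - cᵢ) < δ` one has
`∑ dist (γ cᵢ) (γ dᵢ) < ε`. -/
def AbsContOn {X : Type*} [MetricSpace X] (γ : ℝ → X) (a b : ℝ) : Prop :=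
  ∀ ε > (0 : ℝ), ∃ δ > (0 : ℝ), ∀ (n : ℕ) (c d : Fin n → ℝ),
    (∀ i, a ≤ c i ∧ c i < d i ∧ d i ≤ b) →
    (Pairwise fun i j => Disjoint (Set.Ioo (c i) (d i)) (Set.Ioo (c j) (d j))) →
    ∑ i, (d i - c i) < δ →
    ∑ i, dist (γ (c i)) (γ (d i)) < ε

open Set Filter Topology MeasureTheory
open scoped NNReal ENNReal

lemma countable_not_accPt {Y : Type*} [TopologicalSpace Y] [SecondCountableTopology Y]
    (S : Set Y) : {x ∈ S | ¬ AccPt x (𝓟 S)}.Countable := by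
  set T := {x ∈ S | ¬ AccPt x (𝓟 S)} with hT
  have hd : DiscreteTopology T := by
    rw [discreteTopology_subtype_iff]
    intro x hx
    have h := hx.2
    rw [AccPt, Filter.neBot_iff, not_not] at h
    refine le_bot_iff.1 (le_trans ?_ h.le)
    exact inf_le_inf_left _ (principal_mono.2 fun y hy => hy.1)
  have : Countable T := by
    rw [← TopologicalSpace.separableSpace_iff_countable]
    infer_instance
  exact this

lemma absCont_convert {f : ℝ → ℝ} {a b : ℝ} (hab : a ≤ b) (hf : AbsContOn f a b) :
    AbsolutelyContinuousOnInterval f a b := by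
  rw [absolutelyContinuousOnInterval_iff]
  intro ε hε
  obtain ⟨δ, hδ, h⟩ := hf ε hε
  refine ⟨δ, hδ, ?_⟩
  rintro ⟨n, I⟩ ⟨hE1, hE2⟩ hlen
  simp only at hE1 hE2 hlen ⊢
  rw [uIcc_of_le hab] at hE1
  classical
  let S : Finset ℕ := (Finset.range n).filter (fun i => (I i).1 ≠ (I i).2)
  let e : Fin S.card ≃ S := S.equivFin.symm
  have hS : ∀ i : S, i.1 ∈ Finset.range n ∧ (I i).1 ≠ (I i).2 := fun i => Finset.mem_filter.1 i.2
  have hsum : ∀ F : ℕ → ℝ, ∑ i, F (e i) = ∑ x ∈ S, F x := fun F =>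
    (Equiv.sum_comp e (fun x : S => F x)).trans (Finset.sum_coe_sort S F)
  have key := h S.card (fun i => min (I (e i)).1 (I (e i)).2) (fun i => max (I (e i)).1 (I (e i)).2)
    (by
      intro i
      have h1 := hS (e i)
      have h2 := hE1 _ h1.1
      refine ⟨le_min h2.1.1 h2.2.1, min_lt_max.2 h1.2, max_le h2.1.2 h2.2.2⟩)
    (by
      intro i j hij
      have h1 := hE2 (hS (e i)).1 (hS (e j)).1 (by
        intro hh; exact hij (e.injective (Subtype.ext hh)))
      exact h1.mono Ioo_subset_Ioc_self Ioo_subset_Ioc_self)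
    (by
      refine lt_of_eq_of_lt ?_ hlen
      rw [← Finset.sum_filter_of_ne (p := fun i => (I i).1 ≠ (I i).2)]
      · refine Eq.trans ?_ (hsum _)
        refine Finset.sum_congr rfl fun i _ => ?_
        rw [max_sub_min_eq_abs', Real.dist_eq]
      · intro i _ hi; exact fun hh => hi (by rw [hh, dist_self]))
  refine lt_of_eq_of_lt ?_ key
  rw [← Finset.sum_filter_of_ne (p := fun i => (I i).1 ≠ (I i).2)]
  · refine Eq.trans (hsum _).symm ?_
    refine Finset.sum_congr rfl fun i _ => ?_
    rcases le_total (I (e i)).1 (I (e i)).2 with hle | hle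
    · rw [min_eq_left hle, max_eq_right hle]
    · rw [min_eq_right hle, max_eq_left hle, dist_comm]
  · intro i _ hi; exact fun hh => hi (by rw [hh, dist_self])

lemma lintegral_deriv_le_eVariationOn {f : ℝ → ℝ} {a b : ℝ} (hab : a ≤ b)
    (hf : AbsolutelyContinuousOnInterval f a b) :
    ∫⁻ t in Icc a b, ‖deriv f t‖ₑ ≤ eVariationOn f (Icc a b) := by
  have hbv := hf.boundedVariationOn
  rw [uIcc_of_le hab] at hbv
  have hl := hbv.locallyBoundedVariationOn
  set v := variationOnFromTo f (Icc a b) a with hv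
  have hmono : MonotoneOn v (Icc a b) := variationOnFromTo.monotoneOn hl (left_mem_Icc.2 hab)
  obtain ⟨G, hG1, hG2, hG3⟩ := hmono.exists_tendsto_deriv_liminf_lintegral_enorm_le hab
  have h1 : ∫⁻ t in Icc a b, ‖deriv v t‖ₑ ≤ ENNReal.ofReal (v b - v a) := by
    refine le_trans ?_ hG3
    refine le_trans (le_of_eq ?_) (lintegral_liminf_le' fun n => (hG2 n).enorm)
    refine lintegral_congr_ae ?_
    filter_upwards [hG1] with x hx
    exact (hx.enorm.liminf_eq).symm
  have h2 : ENNReal.ofReal (v b - v a) = eVariationOn f (Icc a b) := by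
    rw [hv, variationOnFromTo.self, sub_zero, variationOnFromTo.eq_of_le _ _ hab, inter_self,
      ENNReal.ofReal_toReal hbv]
  refine le_trans ?_ (h1.trans h2.le)
  refine lintegral_mono_ae ?_
  have hvd : ∀ᵐ x, x ∈ Icc a b → DifferentiableWithinAt ℝ v (Icc a b) x :=
    hmono.ae_differentiableWithinAt_of_mem
  rw [← restrict_Ioo_eq_restrict_Icc, ae_restrict_iff' measurableSet_Ioo]
  have hfd := hf.ae_differentiableAt
  rw [uIcc_of_le hab] at hfd
  filter_upwards [hfd, hvd] with x hx1 hx2 hx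
  have hxI := Ioo_subset_Icc_self hx
  have hn : Icc a b ∈ 𝓝 x := Icc_mem_nhds hx.1 hx.2
  have d1 := (hx1 hxI).hasDerivAt
  have d2 := ((hx2 hxI).differentiableAt hn).hasDerivAt
  rw [hasDerivAt_iff_tendsto_slope] at d1 d2
  rw [← ofReal_norm, ← ofReal_norm]
  refine ENNReal.ofReal_le_ofReal ?_
  refine le_of_tendsto_of_tendsto d1.norm d2.norm ?_
  filter_upwards [mem_nhdsWithin_of_mem_nhds hn] with y hy
  simp only [slope_def_field, norm_div]
  refine div_le_div_of_nonneg_right ?_ (norm_nonneg _)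
  simp only [Real.norm_eq_abs]
  have key : ∀ p ∈ Icc a b, ∀ q ∈ Icc a b, p ≤ q → |f q - f p| ≤ |v q - v p| := by
    intro p hp q hq hpq
    exact (variationOnFromTo.abs_sub_le_sub_of_le hl (left_mem_Icc.2 hab) hp hq hpq).trans (le_abs_self _)
  rcases le_total x y with h | h
  · exact key x hxI y hy h
  · rw [abs_sub_comm (f y), abs_sub_comm (v y)]
    exact key y hy x hxI h

lemma eVariationOn_le_of_edist_le {f g k : ℝ → ℝ} {s : Set ℝ} {c : ℝ≥0∞}
    (h : ∀ x y, edist (f x) (f y) ≤ c * (edist (g x) (g y) + edist (k x) (k y))) :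
    eVariationOn f s ≤ c * (eVariationOn g s + eVariationOn k s) := by
  refine iSup_le ?_
  rintro ⟨n, u, hu, us⟩
  calc _ ≤ ∑ i ∈ Finset.range n, c * (edist (g (u (i+1))) (g (u i)) + edist (k (u (i+1))) (k (u i))) :=
        Finset.sum_le_sum fun i _ => h _ _
    _ = c * (∑ i ∈ Finset.range n, edist (g (u (i+1))) (g (u i)) +
          ∑ i ∈ Finset.range n, edist (k (u (i+1))) (k (u i))) := by
        rw [← Finset.mul_sum, Finset.sum_add_distrib]
    _ ≤ _ := by
        gcongr
        · exact eVariationOn.sum_le hu us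
        · exact eVariationOn.sum_le hu us

open BoundedContinuousFunction in
lemma uniform_variation_bound {X : Type*} [MetricSpace X] (γ : ℝ → X) (s : Set ℝ)
    (hV : ∀ h : X → ℝ, LipschitzWith 1 h → eVariationOn (h ∘ γ) s ≠ ⊤) :
    ∃ C : ℝ≥0∞, C ≠ ⊤ ∧ ∀ g : X → ℝ, LipschitzWith 1 g → (∀ x, |g x| ≤ 1) →
      eVariationOn (g ∘ γ) s ≤ C := by
  let T : Set (X →ᵇ ℝ) := {f | LipschitzWith 1 f}
  have hTc : IsClosed T := by
    have := (isClosed_setOfPred_lipschitzWith (α := X) (β := ℝ) 1).preimage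
      (continuous_coe (α := X) (β := ℝ))
    exact this
  have : CompleteSpace T := hTc.completeSpace_coe
  have : Nonempty T := ⟨⟨0, LipschitzWith.const' 0⟩⟩
  let F : ℕ → Set T := fun m => {f | eVariationOn ((f : X →ᵇ ℝ) ∘ γ) s ≤ m}
  have hF : ∀ m, IsClosed (F m) := by
    intro m
    rw [← isOpen_compl_iff, isOpen_iff_eventually]
    intro f hf
    have hf' : (m : ℝ≥0∞) < eVariationOn ((f : X →ᵇ ℝ) ∘ γ) s := not_le.1 hf
    have := eVariationOn.lowerSemicontinuous_aux (ι := T) (p := 𝓝 f)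
      (F := fun f' => ((f' : X →ᵇ ℝ) ∘ γ)) (f := ((f : X →ᵇ ℝ) ∘ γ)) (s := s) (by
        intro x _
        have hc : Continuous fun f' : T => (f' : X →ᵇ ℝ) (γ x) :=
          (continuous_eval_const (F := X →ᵇ ℝ) (γ x)).comp continuous_subtype_val
        exact hc.tendsto f) hf'
    filter_upwards [this] with f' h'
    exact not_le.2 h'
  have hU : ⋃ m, F m = univ := by
    refine eq_univ_of_forall fun f => mem_iUnion.2 ?_
    obtain ⟨m, hm⟩ := ENNReal.exists_nat_gt (hV f f.2)
    exact ⟨m, hm.le⟩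
  obtain ⟨m, h0, hint⟩ := nonempty_interior_of_iUnion_of_closed hF hU
  obtain ⟨r, hr, hball⟩ := Metric.mem_nhds_iff.1 (mem_interior_iff_mem_nhds.1 hint)
  have h0F : h0 ∈ F m := interior_subset hint
  set N := ‖(h0 : X →ᵇ ℝ)‖ with hN
  have hNn : 0 ≤ N := norm_nonneg _
  obtain ⟨t, ht0, ht1, htr⟩ : ∃ t : ℝ, 0 < t ∧ t ≤ 1 ∧ t * (N + 1) < r := by
    refine ⟨min 1 (r / (2 * (N + 1))), by positivity, min_le_left _ _, ?_⟩
    calc _ ≤ r / (2 * (N + 1)) * (N + 1) := by gcongr; exact min_le_right _ _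
      _ = r / 2 := by field_simp
      _ < r := by linarith
  refine ⟨ENNReal.ofReal (1 / t) * (m + m), by finiteness, ?_⟩
  intro g hg hg1
  have hgb : ∀ x y, dist (g x) (g y) ≤ 2 := fun x y => by
    rw [Real.dist_eq]; have := hg1 x; have := hg1 y; grind
  let G : X →ᵇ ℝ := ⟨⟨g, hg.continuous⟩, 2, hgb⟩
  have hG : ∀ x, G x = g x := fun x => rfl
  let h : X →ᵇ ℝ := (1 - t) • (h0 : X →ᵇ ℝ) + t • G
  have hh : ∀ x, h x = (1 - t) * (h0 : X →ᵇ ℝ) x + t * g x := fun x => by simp [h, hG]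
  have hhT : h ∈ T := by
    refine LipschitzWith.of_dist_le_mul fun x y => ?_
    have e1 := h0.2.dist_le_mul x y
    have e2 := hg.dist_le_mul x y
    simp only [NNReal.coe_one, one_mul, Real.dist_eq] at e1 e2 ⊢
    rw [hh, hh]
    calc _ = |(1 - t) * ((h0 : X →ᵇ ℝ) x - (h0 : X →ᵇ ℝ) y) + t * (g x - g y)| := by ring_nf
      _ ≤ (1 - t) * |(h0 : X →ᵇ ℝ) x - (h0 : X →ᵇ ℝ) y| + t * |g x - g y| := by
        refine (abs_add_le _ _).trans ?_
        rw [abs_mul, abs_mul, abs_of_nonneg (by linarith : 0 ≤ 1 - t), abs_of_pos ht0]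
      _ ≤ (1 - t) * dist x y + t * dist x y := by
        gcongr
      _ = dist x y := by ring
  have hhF : (⟨h, hhT⟩ : T) ∈ F m := by
    apply hball
    rw [Metric.mem_ball, Subtype.dist_eq]
    refine lt_of_le_of_lt ((BoundedContinuousFunction.dist_le (by positivity)).2 fun x => ?_) htr
    have e1 : |(h0 : X →ᵇ ℝ) x| ≤ N := (h0 : X →ᵇ ℝ).norm_coe_le_norm x
    rw [Real.dist_eq]
    change |h x - _| ≤ _
    rw [hh]
    calc _ = t * |g x - (h0 : X →ᵇ ℝ) x| := by
          rw [← abs_of_pos ht0, ← abs_mul, abs_of_pos ht0]; ring_nf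
      _ ≤ t * (N + 1) := by
          gcongr
          have := hg1 x
          grind
  refine (eVariationOn_le_of_edist_le (f := g ∘ γ) (g := h ∘ γ) (k := (h0 : X →ᵇ ℝ) ∘ γ)
    (c := ENNReal.ofReal (1 / t)) ?_).trans ?_
  · intro x y
    rw [edist_dist, edist_dist, edist_dist, ← ENNReal.ofReal_add dist_nonneg dist_nonneg,
      ← ENNReal.ofReal_mul (by positivity)]
    refine ENNReal.ofReal_le_ofReal ?_
    simp only [Real.dist_eq, Function.comp]
    rw [hh, hh, div_mul_eq_mul_div, le_div_iff₀ ht0, one_mul, mul_comm]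
    set A := (h0 : X →ᵇ ℝ) (γ x)
    set B := (h0 : X →ᵇ ℝ) (γ y)
    have e1 : t * |g (γ x) - g (γ y)| = |((1 - t) * A + t * g (γ x) - ((1 - t) * B + t * g (γ y)))
        - (1 - t) * (A - B)| := by
      rw [← abs_of_pos ht0, ← abs_mul, abs_of_pos ht0]; ring_nf
    rw [e1]
    refine (abs_sub _ _).trans (add_le_add_right ?_ _)
    rw [abs_mul, abs_of_nonneg (by linarith : 0 ≤ 1 - t)]
    have := abs_nonneg (A - B)
    nlinarith
  · gcongr
    · exact hhF
    · exact h0F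

lemma countable_transversal (f g : ℝ → ℝ) :
    {p : ℝ × ℝ | f p.1 = f p.2 ∧ g p.1 = g p.2 ∧
      DifferentiableAt ℝ f p.1 ∧ DifferentiableAt ℝ f p.2 ∧
      DifferentiableAt ℝ g p.1 ∧ DifferentiableAt ℝ g p.2 ∧
      deriv f p.1 * deriv g p.2 ≠ deriv g p.1 * deriv f p.2}.Countable := by
  set W := {p : ℝ × ℝ | f p.1 = f p.2 ∧ g p.1 = g p.2 ∧
      DifferentiableAt ℝ f p.1 ∧ DifferentiableAt ℝ f p.2 ∧
      DifferentiableAt ℝ g p.1 ∧ DifferentiableAt ℝ g p.2 ∧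
      deriv f p.1 * deriv g p.2 ≠ deriv g p.1 * deriv f p.2} with hW
  refine Set.Countable.mono (s₂ := {x ∈ W | ¬ AccPt x (𝓟 W)}) ?_ (countable_not_accPt W)
  intro p hp
  refine ⟨hp, ?_⟩
  obtain ⟨-, -, f1, f2, g1, g2, hdet⟩ := hp
  set α := deriv f p.1
  set β := deriv f p.2
  set α₂ := deriv g p.1
  set β₂ := deriv g p.2
  have hf1 : HasFDerivAt (fun q : ℝ × ℝ => f q.1) (α • ContinuousLinearMap.fst ℝ ℝ ℝ) p :=
    f1.hasDerivAt.comp_hasFDerivAt p hasFDerivAt_fst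
  have hf2 : HasFDerivAt (fun q : ℝ × ℝ => f q.2) (β • ContinuousLinearMap.snd ℝ ℝ ℝ) p :=
    f2.hasDerivAt.comp_hasFDerivAt p hasFDerivAt_snd
  have hg1 : HasFDerivAt (fun q : ℝ × ℝ => g q.1) (α₂ • ContinuousLinearMap.fst ℝ ℝ ℝ) p :=
    g1.hasDerivAt.comp_hasFDerivAt p hasFDerivAt_fst
  have hg2 : HasFDerivAt (fun q : ℝ × ℝ => g q.2) (β₂ • ContinuousLinearMap.snd ℝ ℝ ℝ) p :=
    g2.hasDerivAt.comp_hasFDerivAt p hasFDerivAt_snd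
  have hF := (hf1.sub hf2).prodMk (hg1.sub hg2)
  set D := α * β₂ - α₂ * β with hD
  have hD0 : D ≠ 0 := sub_ne_zero.2 hdet
  have hev := hF.eventually_ne (c := (0, 0)) (by
    refine ⟨NNReal.mk ((|α| + |β| + |α₂| + |β₂|) / |D|) (by positivity),
      AddMonoidHomClass.antilipschitz_of_bound _ fun z => ?_⟩
    rw [NNReal.coe_mk]
    simp only [ContinuousLinearMap.prod_apply, Prod.norm_def, Real.norm_eq_abs,
      _root_.sub_apply, _root_.smul_apply,
      ContinuousLinearMap.coe_fst', ContinuousLinearMap.coe_snd', smul_eq_mul]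
    rw [div_mul_eq_mul_div, le_div_iff₀ (abs_pos.2 hD0)]
    set P := α * z.1 - β * z.2 with hP
    set Q := α₂ * z.1 - β₂ * z.2 with hQ
    have e1 : z.1 * D = β₂ * P - β * Q := by rw [hP, hQ, hD]; ring
    have e2 : z.2 * D = α₂ * P - α * Q := by rw [hP, hQ, hD]; ring
    have hPM := le_max_left |P| |Q|
    have hQM := le_max_right |P| |Q|
    set M := max |P| |Q|
    have hM : 0 ≤ M := (abs_nonneg _).trans hPM
    rw [max_mul_of_nonneg _ _ (abs_nonneg D), ← abs_mul, ← abs_mul, e1, e2]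
    have a1 := abs_nonneg α
    have a2 := abs_nonneg β
    have a3 := abs_nonneg α₂
    have a4 := abs_nonneg β₂
    refine max_le ((abs_sub _ _).trans ?_) ((abs_sub _ _).trans ?_) <;>
    · rw [abs_mul, abs_mul]
      nlinarith [mul_le_mul_of_nonneg_left hPM a4, mul_le_mul_of_nonneg_left hQM a2,
        mul_le_mul_of_nonneg_left hPM a3, mul_le_mul_of_nonneg_left hQM a1,
        mul_nonneg a1 hM, mul_nonneg a2 hM, mul_nonneg a3 hM, mul_nonneg a4 hM])
  rw [accPt_iff_frequently_nhdsNE]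
  intro hfr
  apply hfr
  filter_upwards [hev] with q hq hqW
  apply hq
  ext
  · simp [hqW.1]
  · simp [hqW.2.1]

/-- gluing -/
lemma glue_lipschitz {X ι : Type*} [MetricSpace X] [Finite ι] (S : ι → Set X)
    (hS : ∀ i, IsCompact (S i)) (hdisj : ∀ i j, i ≠ j → Disjoint (S i) (S j)) :
    ∃ σ : ℝ, 0 < σ ∧ ∀ g : ι → X → ℝ, (∀ i, LipschitzWith 1 (g i)) → (∀ i x, |g i x| ≤ σ) →
      ∃ h : X → ℝ, LipschitzWith 1 h ∧ (∀ x, |h x| ≤ 1) ∧ ∀ i, EqOn h (g i) (S i) := by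
  have hev : ∀ᶠ σ : ℝ in 𝓝[>] 0, (0 < σ ∧ σ ≤ 1) ∧
      ∀ i j, i ≠ j → ∀ x ∈ S i, ∀ y ∈ S j, 2 * σ ≤ dist x y := by
    refine Eventually.and ?_ ?_
    · exact Ioc_mem_nhdsGT one_pos
    · rw [eventually_all]; intro i
      rw [eventually_all]; intro j
      by_cases hij : i = j
      · exact Eventually.of_forall fun _ h => (h hij).elim
      obtain ⟨r, hr, h⟩ := Metric.exists_pos_forall_lt_edist (hS i) (hS j).isClosed (hdisj i j hij)
      have : (0:ℝ) < r / 2 := by positivity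
      filter_upwards [Ioc_mem_nhdsGT this] with σ hσ _ x hx y hy
      have h1 := h x hx y hy
      rw [edist_nndist, ENNReal.coe_lt_coe, ← NNReal.coe_lt_coe, coe_nndist] at h1
      linarith [hσ.2]
  obtain ⟨σ, ⟨hσ0, hσ1⟩, hσ⟩ := hev.exists
  refine ⟨σ, hσ0, fun g hg hgσ => ?_⟩
  classical
  have hex : ∀ x : X, ∃ v : ℝ, ∀ i, x ∈ S i → v = g i x := by
    intro x
    by_cases hx : ∃ i, x ∈ S i
    · obtain ⟨i, hi⟩ := hx
      refine ⟨g i x, fun j hj => ?_⟩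
      by_cases hij : i = j
      · rw [hij]
      · exact (Set.disjoint_left.1 (hdisj i j hij) hi hj).elim
    · exact ⟨0, fun i hi => (hx ⟨i, hi⟩).elim⟩
  choose f hf using hex
  have hfL : LipschitzOnWith 1 f (⋃ i, S i) := by
    refine LipschitzOnWith.of_dist_le_mul fun x hx y hy => ?_
    obtain ⟨i, hi⟩ := mem_iUnion.1 hx
    obtain ⟨j, hj⟩ := mem_iUnion.1 hy
    rw [hf x i hi, hf y j hj]
    by_cases hij : i = j
    · subst hij; exact (hg i).dist_le_mul x y
    · have h1 := hσ i j hij x hi y hj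
      have h2 := hgσ i x
      have h3 := hgσ j y
      rw [Real.dist_eq, NNReal.coe_one, one_mul]
      refine (abs_sub _ _).trans ?_
      linarith
  obtain ⟨k, hk, hkf⟩ := hfL.extend_real
  refine ⟨fun x => max (-1) (min 1 (k x)), (hk.const_min 1).const_max (-1), ?_, ?_⟩
  · intro x
    rw [abs_le]
    exact ⟨le_max_left _ _, max_le (by norm_num) (min_le_left _ _)⟩
  · intro i x hx
    have e : k x = g i x := by rw [← hkf (mem_iUnion.2 ⟨i, hx⟩), hf x i hx]
    have h2 := abs_le.1 ((hgσ i x).trans hσ1)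
    simp only [e]
    rw [min_eq_right h2.2, max_eq_right h2.1]

lemma deriv_eq_on_compact {u w : ℝ → ℝ} {K : Set ℝ} (huw : EqOn u w K) {t : ℝ} (ht : t ∈ K)
    (hacc : AccPt t (𝓟 K)) (hu : DifferentiableAt ℝ u t) (hw : DifferentiableAt ℝ w t) :
    deriv u t = deriv w t := by
  have h1 := hu.hasDerivAt.hasDerivWithinAt (s := K)
  have h2 := (hw.hasDerivAt.hasDerivWithinAt (s := K)).congr huw (huw ht)
  exact hacc.uniqueDiffWithinAt.eq_deriv K h1 h2

lemma lintegral_iSup_deriv_le {X : Type*} [MetricSpace X] {a b : ℝ} (hab : a ≤ b) (γ : ℝ → X)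
    (hγ : ContinuousOn γ (Icc a b))
    (hAC : ∀ h : X → ℝ, LipschitzWith 1 h → AbsolutelyContinuousOnInterval (h ∘ γ) a b)
    {C : ℝ≥0∞} (hC : ∀ g : X → ℝ, LipschitzWith 1 g → (∀ x, |g x| ≤ 1) →
      eVariationOn (g ∘ γ) (Icc a b) ≤ C)
    (n : ℕ) (φ : Fin n → X → ℝ) (hφ : ∀ i, LipschitzWith 1 (φ i)) :
    ∫⁻ t in Icc a b, ⨆ i, ‖deriv (φ i ∘ γ) t‖ₑ ≤ C + C := by
  set d : Fin n → ℝ → ℝ := fun i => deriv (φ i ∘ γ) with hd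
  have hdm : ∀ i, Measurable (d i) := fun i => measurable_deriv _
  have hdiff : ∀ h : X → ℝ, LipschitzWith 1 h →
      ∀ᵐ t ∂(volume.restrict (Icc a b)), DifferentiableAt ℝ (h ∘ γ) t := by
    intro h hh
    rw [ae_restrict_iff' measurableSet_Icc]
    have := (hAC h hh).ae_differentiableAt
    rwa [uIcc_of_le hab] at this
  -- exceptional countable set
  let W : Fin n → Fin n → Set (ℝ × ℝ) := fun i j =>
    {p : ℝ × ℝ | (φ i ∘ γ) p.1 = (φ i ∘ γ) p.2 ∧ (φ j ∘ γ) p.1 = (φ j ∘ γ) p.2 ∧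
      DifferentiableAt ℝ (φ i ∘ γ) p.1 ∧ DifferentiableAt ℝ (φ i ∘ γ) p.2 ∧
      DifferentiableAt ℝ (φ j ∘ γ) p.1 ∧ DifferentiableAt ℝ (φ j ∘ γ) p.2 ∧
      d i p.1 * d j p.2 ≠ d j p.1 * d i p.2}
  let N : Set ℝ := ⋃ i, ⋃ j, Prod.fst '' W i j
  have hN : N.Countable := countable_iUnion fun i => countable_iUnion fun j =>
    (countable_transversal _ _).image _
  let A : Fin n → Set ℝ := fun k => {t | t ∈ Icc a b ∧ t ∉ N ∧
    (∀ i, DifferentiableAt ℝ (φ i ∘ γ) t) ∧ d k t ≠ 0 ∧ (∀ j, |d j t| ≤ |d k t|) ∧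
    ∀ j, j < k → |d j t| < |d k t|}
  have hAm : ∀ k, MeasurableSet (A k) := by
    intro k
    refine measurableSet_Icc.inter (hN.measurableSet.compl.inter (MeasurableSet.inter ?_
      (MeasurableSet.inter ?_ (MeasurableSet.inter ?_ ?_))))
    · exact measurableSet_setOfPred.2 (Measurable.forall fun i =>
        measurableSet_setOfPred.1 (measurableSet_of_differentiableAt ℝ _))
    · exact (hdm k (measurableSet_singleton 0)).compl
    · exact measurableSet_setOfPred.2 (Measurable.forall fun i =>
        measurableSet_setOfPred.1 (measurableSet_le (hdm i).abs (hdm k).abs))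
    · exact measurableSet_setOfPred.2 (Measurable.forall fun i => Measurable.forall fun _ =>
        measurableSet_setOfPred.1 (measurableSet_lt (hdm i).abs (hdm k).abs))
  have hAdisj' : ∀ k l, k < l → Disjoint (γ '' A k) (γ '' A l) := by
    intro k l hkl
    rw [Set.disjoint_left]
    rintro _ ⟨s, hs, rfl⟩ ⟨t, ht, hts⟩
    obtain ⟨-, hsN, hsd, hs0, hsm, -⟩ := hs
    obtain ⟨-, -, htd, -, -, htl⟩ := ht
    have hdet : d k s * d l t = d l s * d k t := by
      by_contra hne
      apply hsN
      refine mem_iUnion.2 ⟨k, mem_iUnion.2 ⟨l, ⟨(s, t), ?_, rfl⟩⟩⟩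
      exact ⟨by simp [hts], by simp [hts], hsd k, htd k, hsd l, htd l, hne⟩
    have h1 := congrArg abs hdet
    rw [abs_mul, abs_mul] at h1
    have h2 := htl k hkl
    have h3 := hsm l
    have h4 := abs_pos.2 hs0
    have h5 := abs_nonneg (d k t)
    nlinarith
  have hAdisj : ∀ k l, k ≠ l → Disjoint (γ '' A k) (γ '' A l) := by
    intro k l hkl
    rcases lt_or_gt_of_ne hkl with h | h
    · exact hAdisj' k l h
    · exact (hAdisj' l k h).symm
  -- reduce to the sets `A k`
  have hred : ∫⁻ t in Icc a b, ⨆ i, ‖d i t‖ₑ ≤ ∑ k, ∫⁻ t in A k, ‖d k t‖ₑ := by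
    have e : ∀ k, ∫⁻ t in A k, ‖d k t‖ₑ
        = ∫⁻ t in Icc a b, (A k).indicator (fun t => ‖d k t‖ₑ) t := by
      intro k
      rw [setLIntegral_indicator (hAm k), inter_eq_left.2 fun t ht => ht.1]
    simp_rw [e]
    rw [← lintegral_finsetSum _ fun k _ => ((hdm k).enorm.indicator (hAm k))]
    refine lintegral_mono_ae ?_
    have hNae : ∀ᵐ t ∂(volume.restrict (Icc a b)), t ∉ N :=
      ae_restrict_of_ae (hN.ae_notMem _)
    have hdae : ∀ᵐ t ∂(volume.restrict (Icc a b)), ∀ i, DifferentiableAt ℝ (φ i ∘ γ) t :=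
      ae_all_iff.2 fun i => hdiff _ (hφ i)
    filter_upwards [hNae, hdae, ae_restrict_mem measurableSet_Icc] with t h1 h2 h3
    refine iSup_le fun i => ?_
    by_cases hi0 : d i t = 0
    · simp [hi0]
    have hne : Nonempty (Fin n) := ⟨i⟩
    obtain ⟨k0, hk0⟩ := Finite.exists_max fun j => |d j t|
    let P : Set (Fin n) := {k | ∀ j, |d j t| ≤ |d k t|}
    obtain ⟨k, hkP, hkmin⟩ := WellFounded.has_min (wellFounded_lt (α := Fin n)) P ⟨k0, hk0⟩
    have hk : t ∈ A k := by
      refine ⟨h3, h1, h2, ?_, hkP, ?_⟩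
      · intro h0
        have := hkP i
        rw [h0, abs_zero] at this
        exact hi0 (abs_nonpos_iff.1 this)
      · intro j hj
        by_contra hcon
        exact hkmin j (fun l => (hkP l).trans (not_lt.1 hcon)) hj
    calc ‖d i t‖ₑ ≤ ‖d k t‖ₑ := by
          rw [← ofReal_norm, ← ofReal_norm]
          exact ENNReal.ofReal_le_ofReal (hkP i)
      _ = (A k).indicator (fun t => ‖d k t‖ₑ) t := by rw [indicator_of_mem hk]
      _ ≤ _ := Finset.single_le_sum (f := fun k => (A k).indicator (fun t => ‖d k t‖ₑ) t)
          (fun _ _ => zero_le) (Finset.mem_univ k)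
  refine hred.trans ?_
  -- compact subsets
  have hcomp : ∀ K : Fin n → Set ℝ, (∀ k, IsCompact (K k)) → (∀ k, K k ⊆ A k) →
      ∑ k, ∫⁻ t in K k, ‖d k t‖ₑ ≤ C + C := by
    intro K hK hKA
    have hKI : ∀ k, K k ⊆ Icc a b := fun k t ht => (hKA k ht).1
    obtain ⟨σ, hσ, hglue⟩ := glue_lipschitz (fun k => γ '' K k)
      (fun k => (hK k).image_of_continuousOn (hγ.mono (hKI k)))
      (fun i j hij => (hAdisj i j hij).mono (image_mono (hKA i)) (image_mono (hKA j)))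
    have hlip : ∀ s : ℝ → ℝ, LipschitzWith 1 s → ∀ k,
        LipschitzWith 1 (fun x => σ * s (φ k x / σ)) := by
      intro s hs k
      refine LipschitzWith.of_dist_le_mul fun x y => ?_
      have h1 := hs.dist_le_mul (φ k x / σ) (φ k y / σ)
      have h2 := (hφ k).dist_le_mul x y
      simp only [Real.dist_eq, NNReal.coe_one, one_mul] at h1 h2 ⊢
      rw [← mul_sub, abs_mul, abs_of_pos hσ]
      rw [← sub_div, abs_div, abs_of_pos hσ, le_div_iff₀ hσ] at h1
      linarith
    have hbd : ∀ s : ℝ → ℝ, (∀ u, |s u| ≤ 1) → ∀ k x, |σ * s (φ k x / σ)| ≤ σ := by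
      intro s hs k x
      rw [abs_mul, abs_of_pos hσ]
      have := hs (φ k x / σ)
      nlinarith
    obtain ⟨h1, h1L, h1b, h1e⟩ := hglue (fun k x => σ * Real.sin (φ k x / σ))
      (hlip _ Real.lipschitzWith_sin) (hbd _ Real.abs_sin_le_one)
    obtain ⟨h2, h2L, h2b, h2e⟩ := hglue (fun k x => σ * Real.cos (φ k x / σ))
      (hlip _ Real.lipschitzWith_cos) (hbd _ Real.abs_cos_le_one)
    have hKdisj : Pairwise (Function.onFun Disjoint K) := by
      intro i j hij
      refine Set.disjoint_left.2 fun t hi hj => ?_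
      exact Set.disjoint_left.1 (hAdisj i j hij) (mem_image_of_mem γ (hKA i hi))
        (mem_image_of_mem γ (hKA j hj))
    have hptw : ∀ k, ∫⁻ t in K k, ‖d k t‖ₑ ≤
        ∫⁻ t in K k, (‖deriv (h1 ∘ γ) t‖ₑ + ‖deriv (h2 ∘ γ) t‖ₑ) := by
      intro k
      refine lintegral_mono_ae ?_
      have hr := Measure.restrict_mono (μ := volume) (hKI k) le_rfl
      have c1 := (Measure.absolutelyContinuous_of_le hr).ae_le (hdiff h1 h1L)
      have c2 := (Measure.absolutelyContinuous_of_le hr).ae_le (hdiff h2 h2L)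
      have c3 : ∀ᵐ t ∂(volume.restrict (K k)), t ∉ {x ∈ K k | ¬ AccPt x (𝓟 (K k))} :=
        ae_restrict_of_ae ((countable_not_accPt (K k)).ae_notMem _)
      filter_upwards [c1, c2, c3, ae_restrict_mem (hK k).measurableSet] with t t1 t2 t3 t4
      have hacc : AccPt t (𝓟 (K k)) := by
        by_contra hcon; exact t3 ⟨t4, hcon⟩
      have hdk : HasDerivAt (φ k ∘ γ) (d k t) t := ((hKA k t4).2.2.1 k).hasDerivAt
      have hs : HasDerivAt (fun t => σ * Real.sin ((φ k ∘ γ) t / σ))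
          (σ * (Real.cos ((φ k ∘ γ) t / σ) * (d k t / σ))) t :=
        ((hdk.div_const σ).sin).const_mul σ
      have hc : HasDerivAt (fun t => σ * Real.cos ((φ k ∘ γ) t / σ))
          (σ * (-Real.sin ((φ k ∘ γ) t / σ) * (d k t / σ))) t :=
        ((hdk.div_const σ).cos).const_mul σ
      have e1 := deriv_eq_on_compact (u := h1 ∘ γ)
        (w := fun t => σ * Real.sin ((φ k ∘ γ) t / σ))
        (fun x hx => h1e k (mem_image_of_mem γ hx)) t4 hacc t1 hs.differentiableAt
      have e2 := deriv_eq_on_compact (u := h2 ∘ γ)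
        (w := fun t => σ * Real.cos ((φ k ∘ γ) t / σ))
        (fun x hx => h2e k (mem_image_of_mem γ hx)) t4 hacc t2 hc.differentiableAt
      rw [e1, e2, hs.deriv, hc.deriv, ← ofReal_norm, ← ofReal_norm, ← ofReal_norm,
        ← ENNReal.ofReal_add (norm_nonneg _) (norm_nonneg _)]
      refine ENNReal.ofReal_le_ofReal ?_
      set θ := (φ k ∘ γ) t / σ
      have r1 : σ * (Real.cos θ * (d k t / σ)) = Real.cos θ * d k t := by field_simp
      have r2 : σ * (-Real.sin θ * (d k t / σ)) = -(Real.sin θ * d k t) := by field_simp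
      rw [r1, r2, norm_neg, Real.norm_eq_abs, Real.norm_eq_abs, Real.norm_eq_abs, abs_mul, abs_mul]
      have q1 := Real.sin_sq_add_cos_sq θ
      rw [← sq_abs (Real.sin θ), ← sq_abs (Real.cos θ)] at q1
      have q2 := Real.abs_sin_le_one θ
      have q3 := Real.abs_cos_le_one θ
      have q4 : 1 ≤ |Real.cos θ| + |Real.sin θ| := by
        nlinarith [abs_nonneg (Real.sin θ), abs_nonneg (Real.cos θ)]
      nlinarith [abs_nonneg (d k t)]
    calc ∑ k, ∫⁻ t in K k, ‖d k t‖ₑ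
        ≤ ∑ k, ∫⁻ t in K k, (‖deriv (h1 ∘ γ) t‖ₑ + ‖deriv (h2 ∘ γ) t‖ₑ) :=
          Finset.sum_le_sum fun k _ => hptw k
      _ = ∫⁻ t in ⋃ k, K k, (‖deriv (h1 ∘ γ) t‖ₑ + ‖deriv (h2 ∘ γ) t‖ₑ) := by
          rw [lintegral_iUnion (fun k => (hK k).measurableSet) hKdisj, tsum_fintype]
      _ ≤ ∫⁻ t in Icc a b, (‖deriv (h1 ∘ γ) t‖ₑ + ‖deriv (h2 ∘ γ) t‖ₑ) :=
          lintegral_mono_set (iUnion_subset hKI)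
      _ = (∫⁻ t in Icc a b, ‖deriv (h1 ∘ γ) t‖ₑ) + ∫⁻ t in Icc a b, ‖deriv (h2 ∘ γ) t‖ₑ :=
          lintegral_add_left (measurable_deriv _).enorm _
      _ ≤ C + C := add_le_add
          ((lintegral_deriv_le_eVariationOn hab (hAC h1 h1L)).trans (hC h1 h1L h1b))
          ((lintegral_deriv_le_eVariationOn hab (hAC h2 h2L)).trans (hC h2 h2L h2b))
  -- approximate from inside
  refine ENNReal.le_of_forall_pos_le_add fun ε hε _ => ?_
  have happ : ∀ k, ∃ K, K ⊆ A k ∧ IsCompact K ∧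
      ∫⁻ t in A k, ‖d k t‖ₑ ≤ (∫⁻ t in K, ‖d k t‖ₑ) + (ε / (n + 1) : ℝ≥0) := by
    intro k
    have hfin : ∫⁻ t in Icc a b, ‖d k t‖ₑ ≠ ⊤ :=
      ne_top_of_le_ne_top (by
          have := (hAC _ (hφ k)).boundedVariationOn
          rwa [uIcc_of_le hab] at this)
        (lintegral_deriv_le_eVariationOn hab (hAC _ (hφ k)))
    let ν := (volume.restrict (Icc a b)).withDensity fun t => ‖d k t‖ₑ
    have : IsFiniteMeasure ν := isFiniteMeasure_withDensity hfin
    obtain ⟨K, hKA, hK, hlt⟩ := (hAm k).exists_isCompact_lt_add (μ := ν) (measure_ne_top _ _)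
      (ε := (ε / (n + 1) : ℝ≥0)) (by
        rw [Ne, ENNReal.coe_eq_zero]; positivity)
    refine ⟨K, hKA, hK, ?_⟩
    have hν : ∀ S, MeasurableSet S → S ⊆ A k → ν S = ∫⁻ t in S, ‖d k t‖ₑ := by
      intro S hS hSA
      rw [withDensity_apply _ hS, Measure.restrict_restrict hS,
        inter_eq_left.2 fun t ht => (hSA ht).1]
    rw [← hν _ (hAm k) Subset.rfl, ← hν _ hK.measurableSet hKA]
    exact hlt.le
  choose K hKA hK hKle using happ
  calc ∑ k, ∫⁻ t in A k, ‖d k t‖ₑ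
      ≤ ∑ k, ((∫⁻ t in K k, ‖d k t‖ₑ) + (ε / (n + 1) : ℝ≥0)) := Finset.sum_le_sum fun k _ => hKle k
    _ = (∑ k, ∫⁻ t in K k, ‖d k t‖ₑ) + n * (ε / (n + 1) : ℝ≥0) := by
        rw [Finset.sum_add_distrib]; simp
    _ ≤ C + C + ε := by
        gcongr
        · exact hcomp K hK hKA
        · have : (n : ℝ≥0) * (ε / (n + 1)) ≤ ε := by
            rw [mul_div_assoc', div_le_iff₀ (by positivity), mul_comm]
            gcongr
            simp
          exact_mod_cast this

/-- If `γ : [a,b] → X` is continuous and for every Lipschitz function `h : X → ℝ`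
the composition `h ∘ γ` is absolutely continuous, then `γ` itself is absolutely
continuous. -/
theorem absolutelyContinuous_of_comp_lipschitz {X : Type*} [MetricSpace X]
    (a b : ℝ) (γ : ℝ → X) (hγ : ContinuousOn γ (Set.Icc a b))
    (H : ∀ h : X → ℝ, (∃ L : ℝ, 0 ≤ L ∧ ∀ x y : X, |h x - h y| ≤ L * dist x y) →
      AbsContOn (h ∘ γ) a b) :
    AbsContOn γ a b := by
  rcases lt_or_ge b a with hba | hab
  · intro ε hε
    refine ⟨1, one_pos, fun n c d h _ _ => ?_⟩
    have : IsEmpty (Fin n) := ⟨fun i => by have := h i; linarith⟩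
    simpa using hε
  have hAC : ∀ h : X → ℝ, LipschitzWith 1 h → AbsolutelyContinuousOnInterval (h ∘ γ) a b := by
    intro h hh
    refine absCont_convert hab (H h ⟨1, zero_le_one, fun x y => ?_⟩)
    simpa [Real.dist_eq] using hh.dist_le_mul x y
  obtain ⟨C, hCt, hC⟩ := uniform_variation_bound γ (Icc a b) (by
    intro h hh
    have := (hAC h hh).boundedVariationOn
    rwa [uIcc_of_le hab] at this)
  obtain ⟨T, hTs, hTc, hTd⟩ :=
    (isCompact_Icc.image_of_continuousOn hγ).isSeparable.exists_countable_dense_subset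
  have hTne : T.Nonempty := by
    by_contra hcon
    rw [not_nonempty_iff_eq_empty] at hcon
    have := hTd (mem_image_of_mem γ (left_mem_Icc.2 hab))
    simp [hcon] at this
  obtain ⟨x, rfl⟩ := hTc.exists_eq_range hTne
  let φ : ℕ → X → ℝ := fun k y => dist y (x k)
  have hφ : ∀ k, LipschitzWith 1 (φ k) := fun k => LipschitzWith.dist_left (x k)
  let m : ℝ → ℝ≥0∞ := fun t => ⨆ k, ‖deriv (φ k ∘ γ) t‖ₑ
  have hm : ∫⁻ t in Icc a b, m t ≤ C + C := by
    have e : ∀ t, m t = ⨆ n : ℕ, ⨆ i : Fin n, ‖deriv (φ i ∘ γ) t‖ₑ := by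
      intro t
      refine le_antisymm (iSup_le fun k => ?_) (iSup_le fun n => iSup_le fun i => ?_)
      · exact le_iSup_of_le (k + 1) (le_iSup_of_le (⟨k, Nat.lt_succ_self k⟩ : Fin (k + 1)) le_rfl)
      · exact le_iSup (fun k : ℕ => ‖deriv (φ k ∘ γ) t‖ₑ) i
    simp_rw [e]
    rw [lintegral_iSup]
    · exact iSup_le fun n => lintegral_iSup_deriv_le hab γ hγ hAC hC n (fun i => φ i) fun i => hφ i
    · exact fun n => Measurable.iSup fun i => (measurable_deriv _).enorm
    · intro n n' hnn t
      exact iSup_le fun i => le_iSup_of_le (Fin.castLE hnn i) le_rfl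
  have hdist : ∀ c d, a ≤ c → c < d → d ≤ b →
      edist (γ c) (γ d) ≤ ∫⁻ t in Ioo c d, m t := by
    intro c d hac hcd hdb
    have hk : ∀ k, edist (φ k (γ c)) (φ k (γ d)) ≤ ∫⁻ t in Ioo c d, m t := by
      intro k
      have hac' := (hAC _ (hφ k)).mono (c := c) (d := d) (by
        rw [uIcc_of_le hab, uIcc_of_le hcd.le]; exact Icc_subset_Icc hac hdb)
      have h1 := hac'.integral_deriv_eq_sub
      rw [edist_comm, edist_eq_enorm_sub]
      have h2 : φ k (γ d) - φ k (γ c) = ∫ t in c..d, deriv (φ k ∘ γ) t := h1.symm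
      rw [h2, intervalIntegral.integral_of_le hcd.le, integral_Ioc_eq_integral_Ioo]
      refine (enorm_integral_le_lintegral_enorm _).trans (lintegral_mono fun t => ?_)
      exact le_iSup (fun k : ℕ => ‖deriv (φ k ∘ γ) t‖ₑ) k
    refine ENNReal.le_of_forall_pos_le_add fun ε hε _ => ?_
    have hcl := hTd (mem_image_of_mem γ (⟨hac, hcd.le.trans hdb⟩ : c ∈ Icc a b))
    obtain ⟨_, ⟨k, rfl⟩, hk2⟩ := Metric.mem_closure_iff.1 hcl (ε / 2 : ℝ) (by positivity)
    have h3 : dist (γ c) (γ d) ≤ dist (φ k (γ c)) (φ k (γ d)) + ε := by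
      have t1 := dist_triangle (γ c) (x k) (γ d)
      rw [dist_comm (x k)] at t1
      have t2 := neg_abs_le (φ k (γ c) - φ k (γ d))
      rw [Real.dist_eq]
      simp only [φ] at t2 ⊢
      linarith
    calc edist (γ c) (γ d) ≤ edist (φ k (γ c)) (φ k (γ d)) + ε := by
          rw [edist_dist, edist_dist, ← ENNReal.ofReal_coe_nnreal,
            ← ENNReal.ofReal_add dist_nonneg ε.coe_nonneg]
          exact ENNReal.ofReal_le_ofReal h3
      _ ≤ _ := by gcongr; exact hk k
  intro ε hε
  obtain ⟨δ, hδ, hδm⟩ := exists_pos_setLIntegral_lt_of_measure_lt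
    (μ := volume.restrict (Icc a b)) (f := m)
    (ne_top_of_le_ne_top (ENNReal.add_ne_top.2 ⟨hCt, hCt⟩) hm)
    (ε := ENNReal.ofReal ε) (by simpa using hε)
  obtain ⟨δ', hδ'0, hδ'⟩ := ENNReal.lt_iff_exists_nnreal_btwn.1 hδ
  refine ⟨δ', by exact_mod_cast hδ'0, fun n c d hcd hdisj hsum => ?_⟩
  let U : Set ℝ := ⋃ i, Ioo (c i) (d i)
  have hU : U ⊆ Icc a b := iUnion_subset fun i t ht =>
    ⟨(hcd i).1.trans ht.1.le, ht.2.le.trans (hcd i).2.2⟩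
  have hUm : MeasurableSet U := MeasurableSet.iUnion fun i => measurableSet_Ioo
  have hUlt : volume.restrict (Icc a b) U < δ := by
    refine lt_of_le_of_lt (Measure.restrict_apply_le _ _) (lt_of_le_of_lt ?_ hδ')
    refine (measure_iUnion_le _).trans ?_
    rw [tsum_fintype]
    simp_rw [Real.volume_Ioo]
    rw [← ENNReal.ofReal_sum_of_nonneg fun i _ => sub_nonneg.2 (hcd i).2.1.le,
      ← ENNReal.ofReal_coe_nnreal]
    exact ENNReal.ofReal_le_ofReal hsum.le
  have h1 := hδm U hUlt
  rw [Measure.restrict_restrict hUm, inter_eq_left.2 hU,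
    lintegral_iUnion (fun i => measurableSet_Ioo) hdisj, tsum_fintype] at h1
  have h2 : ∑ i, edist (γ (c i)) (γ (d i)) < ENNReal.ofReal ε :=
    lt_of_le_of_lt (Finset.sum_le_sum fun i _ =>
      hdist _ _ (hcd i).1 (hcd i).2.1 (hcd i).2.2) h1
  simp_rw [edist_dist] at h2
  rw [← ENNReal.ofReal_sum_of_nonneg fun i _ => dist_nonneg] at h2
  exact (ENNReal.ofReal_lt_ofReal_iff hε).1 h2
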